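/- For any 1 ≤ r ≤ M_w, the number of x ∈ 𝔽_q^N with w_{(P,w,π)}(x) = r is |A_r| = Σ_{j=1}^{n} Σ_{I ∈ 𝓘_j^j} Σ_{(b_1,…,b_j) ∈ PRT_0[r] having exactly j parts} Σ_{(b_{m_1},…,b_{m_j}) ∈ ARG[(b_1,…,b_j)]} |D_{b_{m_1}}^{k_{i_1}}|·|D_{b_{m_2}}^{k_{i_2}}|⋯|D_{b_{m_j}}^{k_{i_j}}|, where for I ∈ 𝓘_j^j we write Max(I) = {i_1,…,i_j}. -/

import Mathlib

open scoped Classical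

noncomputable section

variable {F : Type*} [Field F] [Fintype F]
variable {ι : Type*} [Fintype ι] [PartialOrder ι]

/-- The block weight induced by `w`: the maximum of the weights of the coordinates. -/
def blockWt (w : F → ℕ) {m : ℕ} (v : Fin m → F) : ℕ :=
  Finset.univ.sup fun t => w (v t)

/-- `M_w`, the maximum weight of an element of `F`. -/
def maxWt (w : F → ℕ) : ℕ := Finset.univ.sup w

/-- `D_r = {α ∈ F : w(α) = r}`. -/
def Dset (w : F → ℕ) (r : ℕ) : Finset F := Finset.univ.filter fun a => w a = r

/-- `D_r^k = {v ∈ F^k : w̃^k(v) = r}`. -/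
def Dk (w : F → ℕ) (m r : ℕ) : Finset (Fin m → F) :=
  Finset.univ.filter fun v => blockWt w v = r

/-- The order ideal (down-set) of the poset generated by a finite set `A`. -/
def genIdeal (A : Finset ι) : Finset ι := Finset.univ.filter fun i => ∃ j ∈ A, i ≤ j

/-- The set of maximal elements of a finite set `I`. -/
def maxElems (I : Finset ι) : Finset ι := I.filter fun i => ∀ j ∈ I, i ≤ j → j = i

/-- `I` is an order ideal (down-set) of the poset. -/
def IsIdeal (I : Finset ι) : Prop := ∀ a b : ι, a ≤ b → b ∈ I → a ∈ I

/-- The collection `𝓘_j^i` of ideals of cardinality `i` with exactly `j` maximal elements. -/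
def idealsWithMax (ι : Type*) [Fintype ι] [PartialOrder ι] (j i : ℕ) : Finset (Finset ι) :=
  Finset.univ.filter fun I => IsIdeal I ∧ I.card = i ∧ (maxElems I).card = j

/-- The π-support of a block vector. -/
def suppPi (k : ι → ℕ) (x : ∀ i, Fin (k i) → F) : Finset ι :=
  Finset.univ.filter fun i => x i ≠ 0

/-- The `(P,w,π)`-weight. -/
def wtP (w : F → ℕ) (k : ι → ℕ) (x : ∀ i, Fin (k i) → F) : ℕ :=
  ∑ i ∈ maxElems (genIdeal (suppPi k x)), blockWt w (x i)
    + maxWt w * ((genIdeal (suppPi k x)) \ maxElems (genIdeal (suppPi k x))).card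

/-- The `(P,w,π)`-distance. -/
def dP (w : F → ℕ) (k : ι → ℕ) (x y : ∀ i, Fin (k i) → F) : ℕ := wtP w k (x - y)

/-- A partition with `|M|` parts, each in `{1,…,R}`, together with an arrangement of its parts
on the set `M` (of maximal elements of an ideal), encoded as the function assigning to each
element of `M` the part placed there; the parts sum to `s` and the function vanishes off `M`. -/
def ARG (M : Finset ι) (R s : ℕ) : Finset (ι → Fin (R + 1)) :=
  Finset.univ.filter fun c =>
    (∀ i ∈ M, 1 ≤ (c i : ℕ)) ∧ (∀ i ∉ M, (c i : ℕ) = 0) ∧ ∑ i ∈ M, (c i : ℕ) = s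

/-!
If some `i ∈ suppPi k x` is not minimal in the poset, then the ideal generated by the support
contains a non-maximal element, contributing `maxWt w`, and a maximal element, contributing at
least `1`. Hence every vector of weight at most `maxWt w` is supported on minimal elements, and its
weight is the plain sum of its block weights. The ideals in `𝓘_j^j` are exactly the `j`-element sets
of minimal elements, so sorting the vectors of weight `r` by support, and then by the tuple of block
weights, yields the formula.
-/

section

open Finset

section BlockWeight

variable {α : Type*} {w : α → ℕ} {m : ℕ}

theorem blockWt_eq_zero_iff [Zero α] (hw0 : ∀ a, w a = 0 ↔ a = 0) {v : Fin m → α} :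
    blockWt w v = 0 ↔ v = 0 := by
  simp [blockWt, hw0, funext_iff]

theorem blockWt_le_maxWt [Fintype α] (v : Fin m → α) : blockWt w v ≤ maxWt w :=
  Finset.sup_le fun t _ => le_sup (f := w) (mem_univ (v t))

theorem Dk_zero [Zero α] [Fintype α] (hw0 : ∀ a, w a = 0 ↔ a = 0) : Dk w m 0 = {0} := by
  ext v
  simp [Dk, blockWt_eq_zero_iff hw0]

end BlockWeight

section Ideals

variable {A I : Finset ι} {i : ι} {j : ℕ}

theorem mem_genIdeal : i ∈ genIdeal A ↔ ∃ a ∈ A, i ≤ a := by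
  simp [genIdeal]

theorem subset_genIdeal : A ⊆ genIdeal A :=
  fun i hi => mem_genIdeal.2 ⟨i, hi, le_rfl⟩

theorem IsIdeal.genIdeal_eq (hI : IsIdeal I) : genIdeal I = I :=
  Subset.antisymm
    (fun i hi => let ⟨a, ha, hia⟩ := mem_genIdeal.1 hi; hI i a hia ha) subset_genIdeal

theorem mem_maxElems : i ∈ maxElems I ↔ Maximal (· ∈ I) i := by
  simp only [maxElems, mem_filter, maximal_iff, eq_comm]

theorem maxElems_subset : maxElems I ⊆ I :=
  filter_subset _ _

theorem maxElems_nonempty (hI : I.Nonempty) : (maxElems I).Nonempty :=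
  let ⟨i, hi⟩ := exists_maximal hI
  ⟨i, mem_maxElems.2 hi⟩

theorem maxElems_genIdeal_subset : maxElems (genIdeal A) ⊆ A := by
  intro i hi
  have hmax := mem_maxElems.1 hi
  obtain ⟨a, ha, hia⟩ := mem_genIdeal.1 hmax.prop
  rwa [hmax.eq_of_le (subset_genIdeal ha) hia]

theorem maxElems_eq_self_iff : maxElems I = I ↔ ∀ i ∈ I, Maximal (· ∈ I) i := by
  rw [Subset.antisymm_iff, and_iff_right maxElems_subset]
  simp only [subset_iff, mem_maxElems]

theorem isIdeal_and_maxElems_eq_self_iff :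
    IsIdeal I ∧ maxElems I = I ↔ ∀ i ∈ I, IsMin i := by
  rw [maxElems_eq_self_iff]
  constructor
  · rintro ⟨hideal, hmax⟩ i hi b hbi
    exact (hmax b (hideal b i hbi hi)).le_of_ge hi hbi
  · intro hmin
    exact ⟨fun a b hab hb => (hmin b hb).eq_of_le hab ▸ hb,
      fun i hi => ⟨hi, fun _ hb hib => hmin _ hb hib⟩⟩

theorem mem_idealsWithMax_self :
    I ∈ idealsWithMax ι j j ↔ (∀ i ∈ I, IsMin i) ∧ #I = j := by
  have card_maxElems_eq_iff : #(maxElems I) = #I ↔ maxElems I = I :=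
    ⟨fun h => eq_of_subset_of_card_le maxElems_subset h.ge, congrArg card⟩
  rw [← isIdeal_and_maxElems_eq_self_iff, ← card_maxElems_eq_iff, idealsWithMax, mem_filter_univ]
  grind

end Ideals

section Weight

variable {w : F → ℕ} {k : ι → ℕ} {r : ℕ} {x : ∀ i, Fin (k i) → F}

theorem mem_suppPi_iff_blockWt_pos {K κ : Type*} [Field K] [Fintype κ] {w : K → ℕ}
    (hw0 : ∀ a, w a = 0 ↔ a = 0) {k : κ → ℕ} {x : ∀ i, Fin (k i) → K} {i : κ} :
    i ∈ suppPi k x ↔ 0 < blockWt w (x i) := by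
  rw [suppPi, mem_filter_univ, Nat.pos_iff_ne_zero, Ne, Ne, blockWt_eq_zero_iff hw0]

theorem wtP_eq_sum_of_forall_isMin (hmin : ∀ i ∈ suppPi k x, IsMin i) :
    wtP w k x = ∑ i ∈ suppPi k x, blockWt w (x i) := by
  obtain ⟨hideal, hmax⟩ := isIdeal_and_maxElems_eq_self_iff.2 hmin
  simp [wtP, hideal.genIdeal_eq, hmax]

theorem maxWt_lt_wtP (hw0 : ∀ a, w a = 0 ↔ a = 0) {i : ι} (hi : i ∈ suppPi k x)
    (hmin : ¬IsMin i) : maxWt w < wtP w k x := by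
  set I := genIdeal (suppPi k x)
  have hiI : i ∈ I := subset_genIdeal hi
  obtain ⟨m, hm⟩ := maxElems_nonempty ⟨i, hiI⟩
  have hsum : 0 < ∑ i ∈ maxElems I, blockWt w (x i) :=
    sum_pos' (fun _ _ => Nat.zero_le _)
      ⟨m, hm, (mem_suppPi_iff_blockWt_pos hw0).1 (maxElems_genIdeal_subset hm)⟩
  have hcard : 0 < #(I \ maxElems I) := by
    obtain ⟨b, hbi⟩ := not_isMin_iff.1 hmin
    have hbI : b ∈ I := mem_genIdeal.2 ⟨i, hi, hbi.le⟩
    exact card_pos.2 ⟨b, mem_sdiff.2 ⟨hbI, fun hb => (mem_maxElems.1 hb).not_gt hiI hbi⟩⟩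
  calc maxWt w ≤ maxWt w * #(I \ maxElems I) := Nat.le_mul_of_pos_right _ hcard
    _ < wtP w k x := Nat.lt_add_of_pos_left hsum

theorem wtP_eq_iff (hw0 : ∀ a, w a = 0 ↔ a = 0) (hr : r ≤ maxWt w) :
    wtP w k x = r ↔
      (∀ i ∈ suppPi k x, IsMin i) ∧ ∑ i ∈ suppPi k x, blockWt w (x i) = r := by
  constructor
  · intro hx
    have hmin : ∀ i ∈ suppPi k x, IsMin i := fun i hi => by
      by_contra hi'
      exact (hx.trans_le hr).not_gt (maxWt_lt_wtP hw0 hi hi')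
    exact ⟨hmin, wtP_eq_sum_of_forall_isMin hmin ▸ hx⟩
  · rintro ⟨hmin, hsum⟩
    rw [wtP_eq_sum_of_forall_isMin hmin, hsum]

theorem suppPi_nonempty_of_wtP_pos (hx : 0 < wtP w k x) : (suppPi k x).Nonempty := by
  by_contra hsupp
  rw [not_nonempty_iff_eq_empty] at hsupp
  rw [wtP_eq_sum_of_forall_isMin (by simp [hsupp]), hsupp, sum_empty] at hx
  exact hx.false

end Weight

section Profile

variable {κ : Type*} [Fintype κ] {w : F → ℕ} {k : κ → ℕ} {r : ℕ} {I : Finset κ}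

/-- The weight profile of a block vector: the tuple of its block weights, with values in
`Fin (maxWt w + 1)` to match the encoding of arrangements in `ARG`. -/
def wtProfile {α κ : Type*} [Fintype α] (w : α → ℕ) (k : κ → ℕ) (x : ∀ i, Fin (k i) → α) :
    κ → Fin (maxWt w + 1) :=
  fun i => ⟨blockWt w (x i), Nat.lt_succ_of_le (blockWt_le_maxWt (x i))⟩

theorem card_filter_wtProfile_eq {α : Type*} [Fintype α] {w : α → ℕ}
    (c : κ → Fin (maxWt w + 1)) :
    #{x : ∀ i, Fin (k i) → α | wtProfile w k x = c} = ∏ i, #(Dk w (k i) (c i)) := by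
  rw [← Fintype.card_piFinset]
  congr 1
  ext x
  simp [wtProfile, Dk, funext_iff, Fin.ext_iff]

theorem wtProfile_mem_ARG_iff (hw0 : ∀ a, w a = 0 ↔ a = 0) {x : ∀ i, Fin (k i) → F} :
    wtProfile w k x ∈ ARG I (maxWt w) r ↔
      suppPi k x = I ∧ ∑ i ∈ I, blockWt w (x i) = r := by
  simp only [ARG, wtProfile, mem_filter_univ, Finset.ext_iff, mem_suppPi_iff_blockWt_pos hw0]
  grind

theorem prod_card_Dk_eq_prod_univ {α : Type*} [Zero α] [Fintype α] {w : α → ℕ}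
    (hw0 : ∀ a, w a = 0 ↔ a = 0) {b : κ → ℕ} (hb : ∀ i ∉ I, b i = 0) :
    ∏ i ∈ I, #(Dk w (k i) (b i)) = ∏ i, #(Dk w (k i) (b i)) :=
  prod_subset (subset_univ I) fun i _ hi => by rw [hb i hi, Dk_zero hw0, card_singleton]

theorem sum_ARG_prod_card_Dk (hw0 : ∀ a, w a = 0 ↔ a = 0) :
    ∑ c ∈ ARG I (maxWt w) r, ∏ i ∈ I, #(Dk w (k i) (c i)) =
      #{x : ∀ i, Fin (k i) → F | suppPi k x = I ∧ ∑ i ∈ I, blockWt w (x i) = r} := by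
  calc ∑ c ∈ ARG I (maxWt w) r, ∏ i ∈ I, #(Dk w (k i) (c i))
      = ∑ c ∈ ARG I (maxWt w) r, #{x : ∀ i, Fin (k i) → F | wtProfile w k x = c} :=
        sum_congr rfl fun c hc => by
          rw [card_filter_wtProfile_eq]
          exact prod_card_Dk_eq_prod_univ hw0 (mem_filter.1 hc).2.2.1
    _ = #{x : ∀ i, Fin (k i) → F | wtProfile w k x ∈ ARG I (maxWt w) r} :=
        sum_card_fiberwise_eq_card_filter _ _ _
    _ = _ := by simp only [wtProfile_mem_ARG_iff hw0]

end Profile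

section Counting

variable {w : F → ℕ} {r : ℕ}

theorem sum_ARG_maxElems_eq_card_filter (hw0 : ∀ a, w a = 0 ↔ a = 0) (k : ι → ℕ)
    (hr : r ≤ maxWt w) {I : Finset ι} (hI : ∀ i ∈ I, IsMin i) :
    ∑ c ∈ ARG (maxElems I) (maxWt w) r, ∏ i ∈ maxElems I, #(Dk w (k i) (c i)) =
      #{x ∈ {x : ∀ i, Fin (k i) → F | wtP w k x = r} | suppPi k x = I} := by
  rw [(isIdeal_and_maxElems_eq_self_iff.2 hI).2, sum_ARG_prod_card_Dk hw0, filter_filter]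
  simp only [wtP_eq_iff hw0 hr]
  congr 1
  ext x
  grind

theorem sum_idealsWithMax_eq_card_filter (hw0 : ∀ a, w a = 0 ↔ a = 0) (k : ι → ℕ)
    (hr : r ≤ maxWt w) (j : ℕ) :
    ∑ I ∈ idealsWithMax ι j j, ∑ c ∈ ARG (maxElems I) (maxWt w) r,
        ∏ i ∈ maxElems I, #(Dk w (k i) (c i)) =
      #{x ∈ {x : ∀ i, Fin (k i) → F | wtP w k x = r} | #(suppPi k x) = j} := by
  rw [sum_congr rfl fun I hI =>
      sum_ARG_maxElems_eq_card_filter hw0 k hr (mem_idealsWithMax_self.1 hI).1,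
    sum_card_fiberwise_eq_card_filter]
  refine congrArg card (filter_congr fun x hx => ?_)
  have hmin := ((wtP_eq_iff hw0 hr).1 (mem_filter.1 hx).2).1
  rw [mem_idealsWithMax_self, and_iff_right hmin]

end Counting

theorem stmt2_general (w : F → ℕ) (hw0 : ∀ a : F, w a = 0 ↔ a = 0)
    (k : ι → ℕ) (r : ℕ) (hr1 : 1 ≤ r) (hr2 : r ≤ maxWt w) :
    #{x : ∀ i, Fin (k i) → F | wtP w k x = r} =
      ∑ j ∈ Icc 1 (Fintype.card ι), ∑ I ∈ idealsWithMax ι j j,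
        ∑ c ∈ ARG (maxElems I) (maxWt w) r,
          ∏ i ∈ maxElems I, #(Dk w (k i) (c i)) := by
  simp only [sum_idealsWithMax_eq_card_filter hw0 k hr2]
  refine card_eq_sum_card_fiberwise fun x hx => ?_
  have hx : wtP w k x = r := (mem_filter.1 hx).2
  have hsupp : (suppPi k x).Nonempty := suppPi_nonempty_of_wtP_pos (hx ▸ hr1)
  exact mem_coe.2 (mem_Icc.2 ⟨hsupp.card_pos, card_le_univ _⟩)

end

/-- the number of vectors of `(P,w,π)`-weight `r` for `1 ≤ r ≤ M_w`, obtained by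
summing, over all ideals `I` with all elements maximal and over all partitions of `r` into
`|Max(I)|` parts together with all arrangements of the parts on `Max(I)`, the products
`|D_{b_{m_1}}^{k_{i_1}}| ⋯ |D_{b_{m_j}}^{k_{i_j}}|`. -/
theorem stmt2 (w : F → ℕ) (hw0 : ∀ a : F, w a = 0 ↔ a = 0)
    (hwneg : ∀ a : F, w (-a) = w a) (hwadd : ∀ a b : F, w (a + b) ≤ w a + w b)
    (k : ι → ℕ) (r : ℕ) (hr1 : 1 ≤ r) (hr2 : r ≤ maxWt w) :
    (Finset.univ.filter fun x : ∀ i, Fin (k i) → F => wtP w k x = r).card =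
      ∑ j ∈ Finset.Icc 1 (Fintype.card ι), ∑ I ∈ idealsWithMax ι j j,
        ∑ c ∈ ARG (maxElems I) (maxWt w) r,
          ∏ i ∈ maxElems I, (Dk w (k i) (c i : ℕ)).card :=
  stmt2_general w hw0 k r hr1 hr2
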